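/- arXiv:1404.7694 — 2 statements merged into one kernel-verified Lean document; each statement's English description precedes it below -/
import Mathlib

section
/- Let d ≥ 2 be an integer and let x₁,…,x_d be nonnegative real numbers with elementary symmetric polynomials e₁,…,e_d (so e₁ = Σ x_i and e₂ = Σ_{i<j} x_i x_j). Define a = ( (d−1)e₁ − √( (d−1)²e₁² − 2e₂·d(d−1) ) ) / ( d(d−1) ) and b = e₁ − (d−1)a (the discriminant (d−1)²e₁² − 2d(d−1)e₂ is nonnegative for any nonnegative x_i). Let f_k denote the k-th elementary symmetric polynomial of the d-tuple (a, a, …, a, b) in which a is repeated d−1 times, i.e. f_k = binom(d−1,k)·a^k + binom(d−1,k−1)·a^{k−1}·b. Then f₁ = e₁, f₂ = e₂, and f_k ≥ e_k for every 1 ≤ k ≤ d. -/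
open Real Finset

/-- Elementary symmetric sum. -/
noncomputable def symE {d : ℕ} (k : ℕ) (x : Fin d → ℝ) : ℝ :=
  ∑ t ∈ Finset.powersetCard k (Finset.univ : Finset (Fin d)), ∏ i ∈ t, x i

lemma symE_eq_coeff {d k : ℕ} (hk : k ≤ d) (x : Fin d → ℝ) :
    symE k x = (∏ i, (Polynomial.X + Polynomial.C (x i))).coeff (d - k) := by
  rw [Finset.prod_X_add_C_coeff _ _ (by simp)]
  simp only [Finset.card_univ, Fintype.card_fin, symE]
  rw [Nat.sub_sub_self hk]

lemma symE_continuous {d k : ℕ} : Continuous (fun x : Fin d → ℝ => symE k x) := by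
  unfold symE
  fun_prop

lemma symE_one {d : ℕ} (x : Fin d → ℝ) : symE 1 x = ∑ i, x i := by
  simp [symE, Finset.powersetCard_one]

lemma symE_canon {d k : ℕ} (hk : 1 ≤ k) (y : Fin d → ℝ) (m : Fin d) (c : ℝ)
    (hy : ∀ i, i ≠ m → y i = c) :
    symE k y = ((d - 1).choose k : ℝ) * c ^ k
      + ((d - 1).choose (k - 1) : ℝ) * c ^ (k - 1) * y m := by
  obtain ⟨n, rfl⟩ : ∃ n, d = n + 1 := ⟨d - 1, by have := m.pos; omega⟩
  obtain ⟨k, rfl⟩ : ∃ j, k = j + 1 := ⟨k - 1, by omega⟩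
  by_cases hkd : k + 1 ≤ n + 1
  · rw [symE_eq_coeff hkd]
    rw [← Finset.prod_erase_mul _ _ (Finset.mem_univ m)]
    rw [Finset.prod_congr rfl (g := fun _ => (Polynomial.X + Polynomial.C c))
      (fun i hi => by rw [hy i (Finset.ne_of_mem_erase hi)])]
    rw [Finset.prod_const, Finset.card_erase_of_mem (Finset.mem_univ m)]
    simp only [Finset.card_univ, Fintype.card_fin, Nat.add_sub_cancel]
    rw [mul_add, Polynomial.coeff_add, Polynomial.coeff_mul_C]
    have hkn : k ≤ n := by omega
    rw [Nat.add_sub_add_right]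
    rw [Polynomial.coeff_X_add_C_pow, Nat.sub_sub_self hkn, Nat.choose_symm hkn]
    rcases Nat.eq_or_lt_of_le hkn with h | h
    · subst h
      simp [Polynomial.coeff_mul_X_zero]
    · obtain ⟨r, hr⟩ : ∃ r, n - k = r + 1 := ⟨n - k - 1, by omega⟩
      rw [hr, Polynomial.coeff_mul_X, Polynomial.coeff_X_add_C_pow]
      have h1 : r = n - (k + 1) := by omega
      have h2 : k + 1 ≤ n := h
      rw [h1, Nat.sub_sub_self h2, Nat.choose_symm h2]
      ring
  · have h1 : n < k + 1 := by omega
    have h2 : n < k := by omega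
    have h3 : symE (k + 1) y = 0 := by
      unfold symE
      rw [Finset.powersetCard_eq_empty.2 (by simp; omega)]
      simp
    rw [h3]
    simp [Nat.choose_eq_zero_of_lt h1, Nat.choose_eq_zero_of_lt h2]

lemma three_var (x y z : ℝ) (hx : 0 ≤ x) (hxy : x < y) (hyz : y ≤ z) :
    ∃ u v : ℝ, 0 ≤ u ∧ 0 ≤ v ∧ u + u + v = x + y + z ∧
      u * u + u * v + u * v = x * y + x * z + y * z ∧ x * y * z < u * u * v := by
  set D := (x + y + z) ^ 2 - 3 * (x * y + x * z + y * z) with hD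
  have hD0 : 0 ≤ D := by nlinarith [sq_nonneg (x - y), sq_nonneg (x - z), sq_nonneg (y - z)]
  set r := Real.sqrt D with hr
  have hr0 : 0 ≤ r := Real.sqrt_nonneg _
  have hr2 : r ^ 2 = D := Real.sq_sqrt hD0
  set u := (x + y + z - r) / 3 with hu
  have hru : r = x + y + z - 3 * u := by rw [hu]; ring
  have h1 : x < u := by
    have : r < (x + y + z) - 3 * x := by
      apply lt_of_pow_lt_pow_left₀ 2 (by linarith)
      rw [hr2, hD]
      nlinarith [mul_pos (sub_pos.2 hxy) (sub_pos.2 (hxy.trans_le hyz))]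
    linarith
  have h2 : u < y := by
    have : (x + y + z) - 3 * y < r := by
      rcases hyz.eq_or_lt with h | h
      · subst h; linarith
      · by_contra hcon
        push Not at hcon
        have := pow_le_pow_left₀ hr0 hcon 2
        rw [hr2, hD] at this
        nlinarith [mul_pos (sub_pos.2 hxy) (sub_pos.2 h)]
    linarith
  have hq : (x + y + z - 3 * u) ^ 2 = D := by rw [← hru, hr2]
  have e2 : u * u + u * (x + y + z - 2 * u) + u * (x + y + z - 2 * u)
      = x * y + x * z + y * z := by rw [hD] at hq; nlinarith
  refine ⟨u, x + y + z - 2 * u, by linarith, by linarith, by ring, e2, ?_⟩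
  have h3 : 0 < (u - x) * ((y - u) * (z - u)) :=
    mul_pos (by linarith) (mul_pos (by linarith) (by linarith))
  have h4 : (u - x) * ((y - u) * (z - u)) = u * u * (x + y + z - 2 * u) - x * y * z := by
    have : u * (x * y + x * z + y * z) =
      u * (u * u + u * (x + y + z - 2 * u) + u * (x + y + z - 2 * u)) := by rw [e2]
    linear_combination this
  linarith

lemma coeff_prod_nonneg {ι : Type*} (s : Finset ι) (y : ι → ℝ) (hy : ∀ i, 0 ≤ y i) (n : ℕ) :
    0 ≤ (∏ i ∈ s, (Polynomial.X + Polynomial.C (y i))).coeff n := by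
  classical
  induction s using Finset.induction_on generalizing n with
  | empty => simp [Polynomial.coeff_one]; split_ifs <;> norm_num
  | insert i s hi ih =>
    rw [Finset.prod_insert hi, Polynomial.coeff_mul]
    refine Finset.sum_nonneg fun p _ => mul_nonneg ?_ (ih _)
    rw [Polynomial.coeff_add, Polynomial.coeff_X, Polynomial.coeff_C]
    have := hy i
    split_ifs <;> linarith

lemma improve {d : ℕ} (y : Fin d → ℝ) (hy : ∀ i, 0 ≤ y i) (i j l : Fin d)
    (hij : i ≠ j) (hil : i ≠ l) (hjl : j ≠ l) (h1 : y i < y j) (h2 : y j ≤ y l) :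
    ∃ y' : Fin d → ℝ, (∀ t, 0 ≤ y' t) ∧ symE 1 y' = symE 1 y ∧ symE 2 y' = symE 2 y ∧
      symE 3 y < symE 3 y' ∧ ∀ k ≤ d, symE k y ≤ symE k y' := by
  obtain ⟨u, v, hu, hv, e1, e2, e3⟩ := three_var _ _ _ (hy i) h1 h2
  set S : Finset (Fin d) := {i, j, l} with hS
  have hcS : S.card = 3 := by rw [hS]; exact Finset.card_eq_three.2 ⟨i, j, l, hij, hil, hjl, rfl⟩
  have hd : 3 ≤ d := by
    have := Finset.card_le_univ S
    simpa [hcS] using this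
  set y' : Fin d → ℝ := fun t => if t = i then u else if t = j then u else if t = l then v else y t
    with hy'
  have split : ∀ w : Fin d → ℝ, ∏ t, (Polynomial.X + Polynomial.C (w t)) =
      (∏ t ∈ Sᶜ, (Polynomial.X + Polynomial.C (w t))) *
      ((Polynomial.X + Polynomial.C (w i)) * ((Polynomial.X + Polynomial.C (w j)) *
        (Polynomial.X + Polynomial.C (w l)))) := by
    intro w
    rw [← Finset.prod_compl_mul_prod S, hS, Finset.prod_insert (by simp [hij, hil]),
      Finset.prod_insert (by simp [hjl]), Finset.prod_singleton]
  set R := ∏ t ∈ Sᶜ, (Polynomial.X + Polynomial.C (y t)) with hR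
  have hR' : ∏ t ∈ Sᶜ, (Polynomial.X + Polynomial.C (y' t)) = R := by
    refine Finset.prod_congr rfl fun t ht => ?_
    simp only [hS, Finset.mem_compl, Finset.mem_insert, Finset.mem_singleton, not_or] at ht
    simp [hy', ht.1, ht.2.1, ht.2.2]
  have yi : y' i = u := by simp [hy']
  have yj : y' j = u := by simp [hy']
  have yl : y' l = v := by simp [hy', hil.symm, hjl.symm]
  have hcard : (Sᶜ).card = d - 3 := by simp [Finset.card_compl, hcS]
  have hdeg : R.natDegree = d - 3 := by
    rw [hR, Polynomial.natDegree_prod_of_monic _ _ (fun t _ => Polynomial.monic_X_add_C _)]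
    simp [hcard]
  have hmon : R.Monic := Polynomial.monic_prod_of_monic _ _ (fun t _ => Polynomial.monic_X_add_C _)
  have key : ∀ k ≤ d, symE k y' = symE k y +
      R.coeff (d - k) * (u * u * v - y i * y j * y l) := by
    intro k hk
    rw [symE_eq_coeff hk, symE_eq_coeff hk, split y, split y', hR', yi, yj, yl,
      ← Polynomial.coeff_mul_C, ← Polynomial.coeff_add]
    congr 1
    have c1 := congrArg (Polynomial.C : ℝ → Polynomial ℝ) e1
    have c2 := congrArg (Polynomial.C : ℝ → Polynomial ℝ) e2
    simp only [Polynomial.C_add, Polynomial.C_mul, Polynomial.C_sub] at c1 c2 ⊢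
    linear_combination R * Polynomial.X ^ 2 * c1 + R * Polynomial.X * c2
  refine ⟨y', ?_, ?_, ?_, ?_, ?_⟩
  · intro t
    simp only [hy']
    split_ifs
    exacts [hu, hu, hv, hy t]
  · rw [key 1 (by omega), Polynomial.coeff_eq_zero_of_natDegree_lt (by omega)]; ring
  · rw [key 2 (by omega), Polynomial.coeff_eq_zero_of_natDegree_lt (by omega)]; ring
  · rw [key 3 hd, ← hdeg, Polynomial.Monic.coeff_natDegree hmon]; linarith
  · intro k hk
    rw [key k hk]
    have := mul_nonneg (coeff_prod_nonneg Sᶜ y hy (d - k)) (sub_nonneg.2 e3.le)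
    linarith

lemma exists_canon {d : ℕ} (hd : 2 ≤ d) (x : Fin d → ℝ) (hx : ∀ i, 0 ≤ x i) (k : ℕ) (hk : k ≤ d)
    (ε : ℝ) (hε : 0 < ε) :
    ∃ (y : Fin d → ℝ) (m : Fin d) (c : ℝ), (∀ i, i ≠ m → y i = c) ∧ c ≤ y m ∧
      symE 1 y = symE 1 x ∧ symE 2 y = symE 2 x ∧
      symE k x + ε * symE 3 x ≤ symE k y + ε * symE 3 y := by
  set K : Set (Fin d → ℝ) := {y | (∀ i, 0 ≤ y i) ∧ symE 1 y = symE 1 x ∧ symE 2 y = symE 2 x}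
    with hK
  have hclosed : IsClosed K := by
    refine IsClosed.inter ?_ (IsClosed.inter ?_ ?_)
    · have : {y : Fin d → ℝ | ∀ i, 0 ≤ y i} = ⋂ i, {y | 0 ≤ y i} := by ext; simp
      change IsClosed {y : Fin d → ℝ | ∀ i, 0 ≤ y i}
      rw [this]
      exact isClosed_iInter fun i => isClosed_le continuous_const (continuous_apply i)
    · exact isClosed_eq symE_continuous continuous_const
    · exact isClosed_eq symE_continuous continuous_const
  have hcomp : IsCompact K := by
    refine IsCompact.of_isClosed_subset
      (isCompact_Icc (a := (0 : Fin d → ℝ)) (b := fun _ => symE 1 x)) hclosed ?_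
    rintro y ⟨h0, h1, -⟩
    refine ⟨h0, fun i => ?_⟩
    rw [← h1, symE_one]
    exact Finset.single_le_sum (fun j _ => h0 j) (Finset.mem_univ i)
  obtain ⟨y, ⟨hy0, hy1, hy2⟩, hmax⟩ := hcomp.exists_isMaxOn ⟨x, hx, rfl, rfl⟩
    (f := fun y => symE k y + ε * symE 3 y)
    ((symE_continuous.add (continuous_const.mul symE_continuous)).continuousOn)
  have hno : ∀ i j l : Fin d, i ≠ j → i ≠ l → j ≠ l → y i < y j → y j ≤ y l → False := by
    intro i j l hij hil hjl h1 h2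
    obtain ⟨y', p0, p1, p2, p3, p4⟩ := improve y hy0 i j l hij hil hjl h1 h2
    have := hmax (show y' ∈ K from ⟨p0, p1.trans hy1, p2.trans hy2⟩)
    simp only [Set.mem_setOf_eq] at this
    have := p4 k hk
    have := mul_lt_mul_of_pos_left p3 hε
    linarith
  haveI : Nonempty (Fin d) := ⟨⟨0, by omega⟩⟩
  haveI : Nontrivial (Fin d) := Fin.nontrivial_iff_two_le.2 hd
  obtain ⟨m, hm⟩ := Finite.exists_max y
  obtain ⟨i₀, hi₀⟩ := exists_ne m
  refine ⟨y, m, y i₀, ?_, hm i₀, hy1, hy2, hmax ⟨hx, rfl, rfl⟩⟩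
  intro i hi
  by_contra hne
  have hii : i ≠ i₀ := fun h => hne (by rw [h])
  rcases lt_or_gt_of_ne hne with h | h
  · exact hno i i₀ m hii hi hi₀ h (hm _)
  · exact hno i₀ i m hii.symm hi₀ hi h (hm _)

/-- **Maximality of the canonical set `(a, …, a, b)`.**
For `d ≥ 2` and nonnegative reals `x₁, …, x_d` with elementary symmetric
polynomials `e_k`, let `a = ((d−1)e₁ − √((d−1)²e₁² − 2e₂d(d−1)))/(d(d−1))`
and `b = e₁ − (d−1)a`, and let
`f_k = C(d−1,k) a^k + C(d−1,k−1) a^{k−1} b` be the elementary symmetric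
polynomials of `(a, …, a, b)` (`a` repeated `d−1` times). Then `f₁ = e₁`,
`f₂ = e₂`, and `f_k ≥ e_k` for all `1 ≤ k ≤ d`. -/
theorem canonical_set_maximizes_esymm (d : ℕ) (hd : 2 ≤ d) (x : Fin d → ℝ)
    (hx : ∀ i, 0 ≤ x i)
    (e : ℕ → ℝ)
    (he : ∀ k, e k = ∑ t ∈ Finset.powersetCard k (Finset.univ : Finset (Fin d)),
      ∏ i ∈ t, x i)
    (a b : ℝ)
    (ha : a = (((d : ℝ) - 1) * e 1
      - Real.sqrt (((d : ℝ) - 1) ^ 2 * (e 1) ^ 2 - 2 * e 2 * d * ((d : ℝ) - 1)))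
        / ((d : ℝ) * ((d : ℝ) - 1)))
    (hb : b = e 1 - ((d : ℝ) - 1) * a)
    (f : ℕ → ℝ)
    (hf : ∀ k, f k = ((d - 1).choose k : ℝ) * a ^ k
      + ((d - 1).choose (k - 1) : ℝ) * a ^ (k - 1) * b) :
    f 1 = e 1 ∧ f 2 = e 2 ∧ ∀ k, 1 ≤ k → k ≤ d → e k ≤ f k := by
  have hE : ∀ k, e k = symE k x := he
  have hd2 : (2 : ℝ) ≤ d := by exact_mod_cast hd
  have hdp : 0 < (d : ℝ) - 1 := by linarith
  have main : ∀ k ≤ d, ∀ ε : ℝ, 0 < ε → f 1 = e 1 ∧ f 2 = e 2 ∧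
      (1 ≤ k → e k + ε * e 3 ≤ f k + ε * f 3) := by
    intro k hk ε hε
    obtain ⟨y, m, c, hyc, hcm, h1, h2, h3⟩ := exists_canon hd x hx k hk ε hε
    have can := fun k (hk : 1 ≤ k) => symE_canon hk y m c hyc
    have hcast : ((d - 1 : ℕ) : ℝ) = (d : ℝ) - 1 := by
      rw [Nat.cast_sub (by omega)]; simp
    have k1 : e 1 = ((d : ℝ) - 1) * c + y m := by
      rw [hE, ← h1, can 1 le_rfl]; simp [hcast]
    have k2 : e 2 = ((d : ℝ) - 1) * ((d : ℝ) - 2) / 2 * c ^ 2 + ((d : ℝ) - 1) * c * y m := by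
      rw [hE, ← h2, can 2 (by norm_num), Nat.cast_choose_two, hcast]
      simp only [Nat.add_one_sub_one, Nat.choose_one_right, hcast, pow_one]
      ring
    have hac : a = c := by
      have hs : ((d : ℝ) - 1) ^ 2 * (e 1) ^ 2 - 2 * e 2 * d * ((d : ℝ) - 1)
          = (((d : ℝ) - 1) * (y m - c)) ^ 2 := by rw [k1, k2]; ring
      rw [ha, hs, Real.sqrt_sq (mul_nonneg hdp.le (by linarith)), k1]
      have : (d : ℝ) ≠ 0 := by linarith
      have := hdp.ne'
      field_simp
      ring
    have hbm : b = y m := by rw [hb, hac, k1]; ring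
    have hfk : ∀ k, 1 ≤ k → f k = symE k y := by
      intro k hk
      rw [hf, can k hk, hac, hbm]
    refine ⟨?_, ?_, fun hk1 => ?_⟩
    · rw [hfk 1 le_rfl, h1, hE]
    · rw [hfk 2 (by norm_num), h2, hE]
    · rw [hfk k hk1, hfk 3 (by norm_num), hE, hE]; exact h3
  obtain ⟨m1, m2, -⟩ := main 0 (Nat.zero_le _) 1 one_pos
  refine ⟨m1, m2, fun k hk1 hkd => ?_⟩
  by_contra hlt
  push Not at hlt
  have hpos : 0 < |f 3 - e 3| + 1 := by positivity
  have h := (main k hkd ((e k - f k) / (|f 3 - e 3| + 1)) (div_pos (by linarith) hpos)).2.2 hk1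
  set ε := (e k - f k) / (|f 3 - e 3| + 1) with hε
  have hε0 : 0 < ε := div_pos (by linarith) hpos
  have h5 : ε * (|f 3 - e 3| + 1) = e k - f k := div_mul_cancel₀ _ hpos.ne'
  have h6 := mul_le_mul_of_nonneg_left (le_abs_self (f 3 - e 3)) hε0.le
  nlinarith
end

section
/- Let d ≥ 2 be an integer and let x₁,…,x_d be positive real numbers with elementary symmetric polynomials e₁ = Σ x_i and e₂ = Σ_{i<j} x_i x_j, and suppose e₂ > 0. Define a = ( (d−1)e₁ − √( (d−1)²e₁² − 2e₂·d(d−1) ) ) / ( d(d−1) ) and b = e₁ − (d−1)a; then a, b > 0. The entropy satisfies the upper bound H(x₁,…,x_d) ≤ −(d−1)·a·ln a − b·ln b. Moreover this bound is attained when (x₁,…,x_d) = (a,…,a,b) with a repeated d−1 times, so it is the tightest upper bound on H depending only on e₁ and e₂. -/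
open Real Finset

theorem aux_esymm_one {ι : Type*} [DecidableEq ι] (s : Finset ι) (x : ι → ℝ) :
    (∑ t ∈ Finset.powersetCard 1 s, ∏ i ∈ t, x i) = ∑ i ∈ s, x i := by
  simp [Finset.powersetCard_one]

theorem aux_esymm_two {ι : Type*} [DecidableEq ι] (s : Finset ι) (x : ι → ℝ) :
    2 * (∑ t ∈ Finset.powersetCard 2 s, ∏ i ∈ t, x i)
      = (∑ i ∈ s, x i) ^ 2 - ∑ i ∈ s, x i ^ 2 := by
  induction s using Finset.induction_on with
  | empty => rw [Finset.powersetCard_eq_empty.mpr (by simp)]; simp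
  | insert j s hj ih =>
    have h2 : (∑ t ∈ Finset.powersetCard 2 (insert j s), ∏ i ∈ t, x i)
        = (∑ t ∈ Finset.powersetCard 2 s, ∏ i ∈ t, x i) + x j * ∑ i ∈ s, x i := by
      rw [Finset.powersetCard_succ_insert hj, Finset.sum_union, Finset.sum_image]
      · congr 1
        rw [← aux_esymm_one s x, Finset.mul_sum]
        apply Finset.sum_congr rfl
        intro t ht
        rw [Finset.prod_insert]
        intro hjt
        exact hj ((Finset.mem_powersetCard.mp ht).1 hjt)
      · intro t ht u hu htu
        have ht' : j ∉ t := fun h => hj ((Finset.mem_powersetCard.mp ht).1 h)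
        have hu' : j ∉ u := fun h => hj ((Finset.mem_powersetCard.mp hu).1 h)
        rw [← Finset.erase_insert ht', ← Finset.erase_insert hu']
        exact congrArg (fun z => Finset.erase z j) htu
      · rw [Finset.disjoint_left]
        intro t ht ht'
        obtain ⟨u, hu, rfl⟩ := Finset.mem_image.mp ht'
        exact hj ((Finset.mem_powersetCard.mp ht).1 (Finset.mem_insert_self j u))
    rw [h2, Finset.sum_insert hj, Finset.sum_insert hj]
    linarith

/-- Concavity of the logarithm along a line through `a`. -/
theorem aux_log (a s c : ℝ) (ha : 0 < a) (hs : 0 ≤ s) (hc : c ≤ 1) (hpos : 0 < a + c * s) :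
    0 ≤ c * ((Real.log (a + c * s) - Real.log a) - c * (Real.log (a + s) - Real.log a)) := by
  have hconc := strictConcaveOn_log_Ioi.concaveOn.2
  have has : 0 < a + s := by linarith
  rcases le_or_gt 0 c with h0 | h0
  · have h := hconc (Set.mem_Ioi.mpr ha) (Set.mem_Ioi.mpr has) (sub_nonneg.mpr hc) h0 (by ring)
    simp only [smul_eq_mul] at h
    rw [show (1 - c) * a + c * (a + s) = a + c * s by ring] at h
    apply mul_nonneg h0
    linarith
  · have hc1 : 0 < 1 - c := by linarith
    have h := hconc (Set.mem_Ioi.mpr hpos) (Set.mem_Ioi.mpr has)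
      (show 0 ≤ 1 / (1 - c) by positivity)
      (show 0 ≤ -c / (1 - c) from div_nonneg (by linarith) hc1.le) (by field_simp; ring)
    simp only [smul_eq_mul] at h
    rw [show 1 / (1 - c) * (a + c * s) + -c / (1 - c) * (a + s) = a by field_simp; ring] at h
    have h' := mul_le_mul_of_nonneg_left h hc1.le
    have e1 : (1 - c) * (1 / (1 - c) * Real.log (a + c * s) + -c / (1 - c) * Real.log (a + s))
        = Real.log (a + c * s) - c * Real.log (a + s) := by field_simp; ring
    rw [e1] at h'
    apply mul_nonneg_of_nonpos_of_nonpos h0.le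
    linarith

theorem aux_psi (a c D : ℝ) (ha : 0 < a) (hD : 0 ≤ D) (hc : c ≤ 1) (hpos : 0 < a + c * D) :
    c ^ 2 * ((a + D) * (Real.log (a + D) - Real.log a) - D)
      ≤ (a + c * D) * (Real.log (a + c * D) - Real.log a) - c * D := by
  have hp : ∀ s ∈ Set.Icc 0 D, 0 < a + c * s := by
    intro s hs
    rcases le_or_gt 0 c with h0 | h0
    · have := mul_nonneg h0 hs.1
      linarith
    · have := mul_le_mul_of_nonpos_left hs.2 h0.le
      linarith
  let G : ℝ → ℝ := fun s => (a + c * s) * (Real.log (a + c * s) - Real.log a) - c * s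
    - c ^ 2 * ((a + s) * (Real.log (a + s) - Real.log a) - s)
  have hder : ∀ s ∈ Set.Icc 0 D, HasDerivAt G
      (c * ((Real.log (a + c * s) - Real.log a) - c * (Real.log (a + s) - Real.log a))) s := by
    intro s hs
    have h1 : a + c * s ≠ 0 := (hp s hs).ne'
    have h2 : a + s ≠ 0 := by have := hs.1; positivity
    have k1 : HasDerivAt (fun s : ℝ => a + c * s) c s := by
      simpa using ((hasDerivAt_id s).const_mul c).const_add a
    have k2 : HasDerivAt (fun s : ℝ => a + s) 1 s := (hasDerivAt_id s).const_add a
    have k3 : HasDerivAt (fun s : ℝ => c * s) c s := by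
      simpa using (hasDerivAt_id s).const_mul c
    have := ((k1.mul ((k1.log h1).sub_const (Real.log a))).sub k3).sub
      (((k2.mul ((k2.log h2).sub_const (Real.log a))).sub (hasDerivAt_id s)).const_mul (c ^ 2))
    refine this.congr_deriv ?_
    field_simp
    ring
  have hmono : MonotoneOn G (Set.Icc 0 D) := by
    apply monotoneOn_of_hasDerivWithinAt_nonneg (convex_Icc 0 D)
      (fun s hs => (hder s hs).continuousAt.continuousWithinAt)
      (fun s hs => (hder s (interior_subset hs)).hasDerivWithinAt)
    intro s hs
    have hs' := interior_subset hs
    exact aux_log a s c ha hs'.1 hc (hp s hs')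
  have h := hmono (Set.left_mem_Icc.mpr hD) (Set.right_mem_Icc.mpr hD) hD
  simp only [G] at h
  simp only [mul_zero, add_zero, sub_self] at h
  linarith

theorem aux_psi' (a b t : ℝ) (ha : 0 < a) (hab : a < b) (ht : 0 < t) (htb : t ≤ b) :
    (t - a) ^ 2 / (b - a) ^ 2 * (b * (Real.log b - Real.log a) - (b - a))
      ≤ t * (Real.log t - Real.log a) - (t - a) := by
  have hD : 0 < b - a := by linarith
  have hcD : (t - a) / (b - a) * (b - a) = t - a := by field_simp
  have h := aux_psi a ((t - a) / (b - a)) (b - a) ha hD.le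
    ((div_le_one hD).mpr (by linarith)) (by rw [hcD]; linarith)
  rw [hcD, div_pow] at h
  simpa using h

theorem aux_le {ι : Type*} [DecidableEq ι] (s : Finset ι) (x : ι → ℝ) (N a b : ℝ)
    (hN : 0 < N) (hcard : (s.card : ℝ) = N + 1) (hab : a ≤ b)
    (h1 : ∑ i ∈ s, x i = N * a + b) (h2 : ∑ i ∈ s, x i ^ 2 = N * a ^ 2 + b ^ 2)
    (j : ι) (hj : j ∈ s) : x j ≤ b := by
  have hc := sq_sum_le_card_mul_sum_sq (s := s.erase j) (f := x)
  have e1 := Finset.add_sum_erase s x hj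
  have e2 := Finset.add_sum_erase s (fun i => x i ^ 2) hj
  have e3 : ((s.erase j).card : ℝ) = N := by
    have := Finset.card_erase_add_one hj
    have : ((s.erase j).card : ℝ) + 1 = s.card := by exact_mod_cast this
    linarith
  rw [e3, show ∑ i ∈ s.erase j, x i = N * a + b - x j by linarith,
    show ∑ i ∈ s.erase j, x i ^ 2 = N * a ^ 2 + b ^ 2 - x j ^ 2 by linarith] at hc
  by_contra hlt
  push Not at hlt
  have p1 : 0 < x j - b := by linarith
  have p2 : 0 < (x j - b) + N * (b + x j - 2 * a) := by
    have : 0 < N * (b + x j - 2 * a) := mul_pos hN (by linarith)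
    linarith
  nlinarith [mul_pos p1 p2]

/-- **Optimal upper bound on the entropy depending only on `e₁` and `e₂`.**
For `d ≥ 2` and positive reals `x₁, …, x_d` with `e₂ > 0`, let
`a = ((d−1)e₁ − √((d−1)²e₁² − 2e₂d(d−1)))/(d(d−1))` and `b = e₁ − (d−1)a`.
Then `a, b > 0` and `H(x) ≤ −(d−1)a ln a − b ln b`. Moreover the bound is
attained by the tuple `(a, …, a, b)` (`a` repeated `d−1` times), which has
the same `e₁` and `e₂`; hence it is the tightest bound depending only on
`e₁` and `e₂`. -/
theorem entropy_upper_bound_e1_e2 (d : ℕ) (hd : 2 ≤ d) (x : Fin d → ℝ)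
    (hx : ∀ i, 0 < x i)
    (e : ℕ → ℝ)
    (he : ∀ k, e k = ∑ t ∈ Finset.powersetCard k (Finset.univ : Finset (Fin d)),
      ∏ i ∈ t, x i)
    (he2 : 0 < e 2)
    (a b : ℝ)
    (ha : a = (((d : ℝ) - 1) * e 1
      - Real.sqrt (((d : ℝ) - 1) ^ 2 * (e 1) ^ 2 - 2 * e 2 * d * ((d : ℝ) - 1)))
        / ((d : ℝ) * ((d : ℝ) - 1)))
    (hb : b = e 1 - ((d : ℝ) - 1) * a)
    (y : Fin d → ℝ) (hy : y = fun i : Fin d => if (i : ℕ) < d - 1 then a else b) :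
    0 < a ∧ 0 < b ∧
    (-∑ i, x i * Real.log (x i)) ≤ -((d : ℝ) - 1) * a * Real.log a - b * Real.log b ∧
    (∑ t ∈ Finset.powersetCard 1 (Finset.univ : Finset (Fin d)), ∏ i ∈ t, y i) = e 1 ∧
    (∑ t ∈ Finset.powersetCard 2 (Finset.univ : Finset (Fin d)), ∏ i ∈ t, y i) = e 2 ∧
    (-∑ i, y i * Real.log (y i)) = -((d : ℝ) - 1) * a * Real.log a - b * Real.log b := by
  obtain ⟨n, rfl⟩ : ∃ n, d = n + 1 := ⟨d - 1, by omega⟩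
  have hn : (0 : ℝ) < n := by
    have : 0 < n := by omega
    exact_mod_cast this
  have h1 : e 1 = ∑ i, x i := by rw [he, aux_esymm_one]
  have h2 : 2 * e 2 = (e 1) ^ 2 - ∑ i, x i ^ 2 := by rw [h1, he, aux_esymm_two]
  have he1 : 0 < e 1 := by
    rw [h1]
    exact Finset.sum_pos (fun i _ => hx i) Finset.univ_nonempty
  have hcs := sq_sum_le_card_mul_sum_sq (s := (Finset.univ : Finset (Fin (n + 1)))) (f := x)
  rw [← h1] at hcs
  simp only [Finset.card_univ, Fintype.card_fin] at hcs
  push_cast at hcs ha hb ⊢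
  rw [show (n : ℝ) + 1 - 1 = n by ring] at ha hb ⊢
  have hp2 : ∑ i, x i ^ 2 = (e 1) ^ 2 - 2 * e 2 := by linarith
  have hdisc : 0 ≤ (n : ℝ) ^ 2 * (e 1) ^ 2 - 2 * e 2 * (n + 1) * n := by
    rw [hp2] at hcs
    have := mul_le_mul_of_nonneg_left hcs hn.le
    nlinarith
  have hS0 := Real.sqrt_nonneg ((n : ℝ) ^ 2 * (e 1) ^ 2 - 2 * e 2 * (n + 1) * n)
  have hS2 := Real.sq_sqrt hdisc
  set S := Real.sqrt ((n : ℝ) ^ 2 * (e 1) ^ 2 - 2 * e 2 * (n + 1) * n) with hS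
  have hSa : S = n * (e 1 - (n + 1) * a) := by
    rw [ha]
    field_simp
    ring
  have hda : 0 ≤ e 1 - (n + 1) * a := by
    rw [hSa] at hS0
    exact nonneg_of_mul_nonneg_right hS0 hn
  have hq : (n : ℝ) * (a * (2 * e 1 - (n + 1) * a)) = 2 * e 2 := by
    rw [hSa] at hS2
    have hne : (n : ℝ) * (n + 1) ≠ 0 := by positivity
    apply mul_left_cancel₀ hne
    linarith
  have hapos : 0 < a := by
    have h3 : 0 < a * (2 * e 1 - (n + 1) * a) := by
      refine pos_of_mul_pos_right ?_ hn.le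
      rw [hq]
      linarith
    exact pos_of_mul_pos_left h3 (by linarith)
  have hab : a ≤ b := by rw [hb]; linarith
  have hbpos : 0 < b := by linarith
  have hsum1 : ∑ i, x i = n * a + b := by rw [← h1, hb]; ring
  have hsum2 : ∑ i, x i ^ 2 = n * a ^ 2 + b ^ 2 := by
    rw [hp2, ← hq, hb]
    ring
  have hxb : ∀ i, x i ≤ b := fun i =>
    aux_le Finset.univ x n a b hn (by simp) hab hsum1 hsum2 i (Finset.mem_univ i)
  have hysum : ∀ g : ℝ → ℝ, ∑ i, g (y i) = n * g a + g b := by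
    intro g
    rw [Fin.sum_univ_castSucc, hy]
    simp
  have hvar : ∑ i, (x i - a) ^ 2 = (b - a) ^ 2 := by
    have : ∀ i, (x i - a) ^ 2 = x i ^ 2 - 2 * a * x i + a ^ 2 := fun i => by ring
    simp only [this]
    rw [Finset.sum_add_distrib, Finset.sum_sub_distrib, ← Finset.mul_sum, hsum1, hsum2]
    simp
    ring
  have hpsi : b * (Real.log b - Real.log a) - (b - a)
      ≤ ∑ i, (x i * (Real.log (x i) - Real.log a) - (x i - a)) := by
    rcases hab.eq_or_lt with heq | hlt
    · rw [← heq] at hvar ⊢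
      have hz : ∀ i, x i = a := by
        intro i
        have h0 : ∑ i, (x i - a) ^ 2 = 0 := by rw [hvar]; ring
        have := (Finset.sum_eq_zero_iff_of_nonneg (fun i _ => sq_nonneg (x i - a))).mp h0 i
          (Finset.mem_univ i)
        have := pow_eq_zero_iff (two_ne_zero) |>.mp this
        linarith
      simp [hz]
    · have hle := Finset.sum_le_sum (fun i (_ : i ∈ Finset.univ) =>
        aux_psi' a b (x i) hapos hlt (hx i) (hxb i))
      rw [← Finset.sum_mul, ← Finset.sum_div, hvar, div_self, one_mul] at hle
      · exact hle
      · have : 0 < b - a := by linarith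
        positivity
  have hexp : ∑ i, (x i * (Real.log (x i) - Real.log a) - (x i - a))
      = ∑ i, x i * Real.log (x i) - (n * a + b) * Real.log a - (n * a + b) + (n + 1) * a := by
    simp only [mul_sub]
    rw [Finset.sum_sub_distrib, Finset.sum_sub_distrib, Finset.sum_sub_distrib,
      ← Finset.sum_mul, hsum1]
    simp
    ring
  refine ⟨hapos, hbpos, ?_, ?_, ?_, ?_⟩
  · rw [hexp] at hpsi
    linarith
  · rw [aux_esymm_one, hysum (fun t => t), h1, hsum1]
  · have h3 := aux_esymm_two Finset.univ y
    rw [hysum (fun t => t), hysum (fun t => t ^ 2), ← hsum1, ← hsum2, ← h1, ← h2] at h3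
    linarith
  · rw [hysum (fun t => t * Real.log t)]
    ring
end
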